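/- For every integer N ≥ 3 and every s with 0 < s < 1, there exist constants C₄ > 0 and C₄' > 0, depending only on N and s, such that C₄ · e^{-(N-1)r} r^{s-1} ≤ F_{N,s}(r) ≤ C₄' · e^{-(N-1)r} r^{s-1} for all r ≥ 1. -/

import Mathlib

open Real MeasureTheory Set Filter

/-- The explicit function comparable to the heat kernel of hyperbolic space `ℍ^N`
at geodesic distance `r`. -/
noncomputable def hN (N : ℕ) (t r : ℝ) : ℝ :=
  (4 * π * t) ^ (-(N : ℝ) / 2) *
    Real.exp (-(((N : ℝ) - 1) ^ 2 * t) / 4 - ((N : ℝ) - 1) * r / 2 - r ^ 2 / (4 * t)) *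
    (1 + r + t) ^ (((N : ℝ) - 3) / 2) * (1 + r)

/-- `F N s r = ∫₀^∞ h_N(t,r) t^{s-1} dt`, comparable to the Green function of
`(-Δ_{ℍ^N})^s` at geodesic distance `r`. -/
noncomputable def F (N : ℕ) (s r : ℝ) : ℝ :=
  ∫ t in Ioi (0 : ℝ), hN N t r * t ^ (s - 1)

lemma aux_bdd (p c : ℝ) (hc : 0 < c) :
    ∃ C > (0 : ℝ), ∀ x : ℝ, 0 ≤ x → (1 + x) ^ p * Real.exp (-(c * x)) ≤ C := by
  obtain ⟨n, hn⟩ := exists_nat_ge p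
  refine ⟨n.factorial / c ^ n * Real.exp c, by positivity, fun x hx => ?_⟩
  have h1 : (1 + x) ^ p ≤ (1 + x) ^ n := by
    rw [← Real.rpow_natCast]
    exact Real.rpow_le_rpow_of_exponent_le (by linarith) hn
  have h2 := Real.pow_div_factorial_le_exp (c * (1 + x)) (by positivity) n
  have hf : (0 : ℝ) < n.factorial := by positivity
  have h3 : (1 + x) ^ n ≤ n.factorial / c ^ n * Real.exp (c * (1 + x)) := by
    rw [div_le_iff₀ hf, mul_pow] at h2
    rw [div_mul_eq_mul_div, le_div_iff₀ (by positivity)]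
    linarith
  calc (1 + x) ^ p * Real.exp (-(c * x))
      ≤ (n.factorial / c ^ n * Real.exp (c * (1 + x))) * Real.exp (-(c * x)) := by
        gcongr
        exact h1.trans h3
    _ = _ := by
        rw [mul_assoc, ← Real.exp_add]
        congr 2
        ring

lemma aux_eq (N : ℕ) (s r u : ℝ) (hr : 0 < r) (hu : 0 < u) :
    hN N (r * u) r * (r * u) ^ (s - 1) =
      (4 * π) ^ (-(N : ℝ) / 2) * Real.exp (-((N : ℝ) - 1) * r) *
        (r ^ (s - 1 - (N : ℝ) / 2) * u ^ (s - 1 - (N : ℝ) / 2)) *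
        Real.exp (-(r * ((((N : ℝ) - 1) * u - 1) ^ 2 / (4 * u)))) *
        ((1 + r + r * u) ^ (((N : ℝ) - 3) / 2) * (1 + r)) := by
  unfold hN
  have e1 : Real.exp (-(((N : ℝ) - 1) ^ 2 * (r * u)) / 4 - ((N : ℝ) - 1) * r / 2
      - r ^ 2 / (4 * (r * u))) = Real.exp (-((N : ℝ) - 1) * r) *
        Real.exp (-(r * ((((N : ℝ) - 1) * u - 1) ^ 2 / (4 * u)))) := by
    rw [← Real.exp_add]
    congr 1
    field_simp
    ring
  have e2 : (4 * π * (r * u)) ^ (-(N : ℝ) / 2) =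
      (4 * π) ^ (-(N : ℝ) / 2) * (r ^ (-(N : ℝ) / 2) * u ^ (-(N : ℝ) / 2)) := by
    rw [Real.mul_rpow (by positivity) (by positivity), Real.mul_rpow hr.le hu.le]
  have e3 : ∀ y : ℝ, 0 < y → y ^ (s - 1 - (N : ℝ) / 2) = y ^ (-(N : ℝ) / 2) * y ^ (s - 1) := by
    intro y hy
    rw [← Real.rpow_add hy]
    congr 1
    ring
  rw [e1, e2, e3 r hr, e3 u hu, Real.mul_rpow hr.le hu.le]
  ring

lemma aux_rpow (N : ℕ) (s r : ℝ) (hr : 0 < r) :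
    r ^ (s - 1 - (N : ℝ) / 2) * (r ^ (((N : ℝ) - 3) / 2) * r) = r ^ (s - 1) * r ^ (-(1 / 2) : ℝ) := by
  rw [← Real.rpow_add_one hr.ne', ← Real.rpow_add hr, ← Real.rpow_add hr]
  congr 1
  ring

lemma aux_upper (N : ℕ) (hN3 : 3 ≤ N) (s : ℝ) (hs1 : s < 1) :
    ∃ C > (0 : ℝ), ∀ r u : ℝ, 1 ≤ r → 0 < u →
      hN N (r * u) r * (r * u) ^ (s - 1) ≤
        C * Real.exp (-((N : ℝ) - 1) * r) * (r ^ (s - 1) * r ^ (-(1 / 2) : ℝ)) *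
          (1 + r / 8 * (((N : ℝ) - 1) * u - 1) ^ 2)⁻¹ := by
  have hN' : (3 : ℝ) ≤ N := by exact_mod_cast hN3
  set a : ℝ := (N : ℝ) - 1 with ha
  have ha2 : 2 ≤ a := by linarith
  obtain ⟨C1, hC1, h1⟩ := aux_bdd (1 + (N : ℝ) / 2 - s) (1 / 8) (by norm_num)
  obtain ⟨C2, hC2, h2⟩ := aux_bdd (((N : ℝ) - 3) / 2 + 1) (a ^ 2 / 8) (by positivity)
  refine ⟨(4 * π) ^ (-(N : ℝ) / 2) * (2 ^ (((N : ℝ) - 3) / 2) * 2) * (C1 * C2 * Real.exp (a / 4)),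
    by positivity, fun r u hr hu => ?_⟩
  have hr0 : 0 < r := by linarith
  rw [aux_eq N s r u hr0 hu, ← ha]
  set φ := (a * u - 1) ^ 2 / (4 * u) with hφ
  have hφ0 : 0 ≤ φ := by positivity
  have hq : 0 ≤ ((N : ℝ) - 3) / 2 := by linarith
  have b1 : (1 + r + r * u) ^ (((N : ℝ) - 3) / 2) * (1 + r) ≤
      (2 ^ (((N : ℝ) - 3) / 2) * 2) * (r ^ (((N : ℝ) - 3) / 2) * r) *
        (1 + u) ^ (((N : ℝ) - 3) / 2) := by
    have : (1 + r + r * u) ^ (((N : ℝ) - 3) / 2) ≤ (2 * r * (1 + u)) ^ (((N : ℝ) - 3) / 2) := by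
      apply Real.rpow_le_rpow (by positivity) _ hq
      nlinarith
    calc _ ≤ (2 * r * (1 + u)) ^ (((N : ℝ) - 3) / 2) * (2 * r) := by
          gcongr
          linarith
      _ = _ := by
          rw [Real.mul_rpow (by positivity) (by positivity), Real.mul_rpow (by positivity) hr0.le]
          ring
  have b2 : Real.exp (-(r * φ)) ≤ Real.exp (-(φ / 2)) * Real.exp (-(r / 2 * φ)) := by
    rw [← Real.exp_add]
    apply Real.exp_le_exp.mpr
    nlinarith
  have b3 : Real.exp (-(r / 2 * φ)) ≤ (1 + u) * (1 + r / 8 * (a * u - 1) ^ 2)⁻¹ := by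
    rw [Real.exp_neg, ← div_eq_mul_inv, inv_eq_one_div, div_le_div_iff₀ (Real.exp_pos _) (by positivity)]
    have h4 : 1 + r / 2 * φ ≤ Real.exp (r / 2 * φ) := by
      linarith [Real.add_one_le_exp (r / 2 * φ)]
    have h5 : u * φ = (a * u - 1) ^ 2 / 4 := by
      rw [hφ]; field_simp
    have h6 : (1 + u) * (1 + r / 2 * φ) ≤ (1 + u) * Real.exp (r / 2 * φ) := by gcongr
    have h7 : 0 ≤ r * φ := by positivity
    have h8 : r / 8 * (a * u - 1) ^ 2 = r / 2 * (u * φ) := by rw [h5]; ring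
    rw [h8]
    nlinarith
  have b4 : u ^ (s - 1 - (N : ℝ) / 2) * (1 + u) ^ (((N : ℝ) - 3) / 2) * Real.exp (-(φ / 2)) * (1 + u)
      ≤ C1 * C2 * Real.exp (a / 4) := by
    have i1 := h1 u⁻¹ (by positivity)
    have i2 := h2 u hu.le
    have i3 : u ^ (s - 1 - (N : ℝ) / 2) ≤ (1 + u⁻¹) ^ (1 + (N : ℝ) / 2 - s) := by
      have : u ^ (s - 1 - (N : ℝ) / 2) = u⁻¹ ^ (1 + (N : ℝ) / 2 - s) := by
        rw [Real.inv_rpow hu.le, ← Real.rpow_neg hu.le]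
        congr 1
        ring
      rw [this]
      apply Real.rpow_le_rpow (by positivity) (by linarith) (by linarith)
    have i4 : Real.exp (-(φ / 2)) = Real.exp (a / 4) * Real.exp (-(1 / 8 * u⁻¹)) *
        Real.exp (-(a ^ 2 / 8 * u)) := by
      rw [← Real.exp_add, ← Real.exp_add, hφ]
      congr 1
      field_simp
      ring
    rw [i4]
    calc _ = (u ^ (s - 1 - (N : ℝ) / 2) * Real.exp (-(1 / 8 * u⁻¹))) *
          ((1 + u) ^ (((N : ℝ) - 3) / 2 + 1) * Real.exp (-(a ^ 2 / 8 * u))) * Real.exp (a / 4) := by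
          rw [Real.rpow_add_one (by positivity)]
          ring
      _ ≤ _ := by
          gcongr
          exact le_trans (by gcongr) i1
  calc _ ≤ (4 * π) ^ (-(N : ℝ) / 2) * Real.exp (-a * r) *
        (r ^ (s - 1 - (N : ℝ) / 2) * u ^ (s - 1 - (N : ℝ) / 2)) *
        (Real.exp (-(φ / 2)) * ((1 + u) * (1 + r / 8 * (a * u - 1) ^ 2)⁻¹)) *
        ((2 ^ (((N : ℝ) - 3) / 2) * 2) * (r ^ (((N : ℝ) - 3) / 2) * r) *
        (1 + u) ^ (((N : ℝ) - 3) / 2)) := by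
        gcongr
        exact b2.trans (by gcongr)
    _ = (4 * π) ^ (-(N : ℝ) / 2) * (2 ^ (((N : ℝ) - 3) / 2) * 2) *
        (u ^ (s - 1 - (N : ℝ) / 2) * (1 + u) ^ (((N : ℝ) - 3) / 2) * Real.exp (-(φ / 2)) * (1 + u)) *
        Real.exp (-a * r) * (r ^ (s - 1 - (N : ℝ) / 2) * (r ^ (((N : ℝ) - 3) / 2) * r)) *
        (1 + r / 8 * (a * u - 1) ^ 2)⁻¹ := by ring
    _ ≤ _ := by
        rw [aux_rpow N s r hr0]
        gcongr

lemma aux_lower (N : ℕ) (hN3 : 3 ≤ N) (s : ℝ) (hs1 : s < 1) :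
    ∃ C > (0 : ℝ), ∀ r u : ℝ, 1 ≤ r → 1 / ((N : ℝ) - 1) < u →
      u ≤ 1 / ((N : ℝ) - 1) + 1 / √r →
      C * Real.exp (-((N : ℝ) - 1) * r) * (r ^ (s - 1) * r ^ (-(1 / 2) : ℝ)) ≤
      hN N (r * u) r * (r * u) ^ (s - 1) := by
  have hN' : (3 : ℝ) ≤ N := by exact_mod_cast hN3
  set a : ℝ := (N : ℝ) - 1 with ha
  have ha2 : 2 ≤ a := by linarith
  have ha0 : 0 < a := by linarith
  refine ⟨(4 * π) ^ (-(N : ℝ) / 2) * 2 ^ (s - 1 - (N : ℝ) / 2) * Real.exp (-(a ^ 3 / 4)),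
    by positivity, fun r u hr hu1 hu2 => ?_⟩
  have hr0 : 0 < r := by linarith
  have hu : 0 < u := lt_trans (by positivity) hu1
  rw [aux_eq N s r u hr0 hu, ← ha]
  have hsq : 1 ≤ √r := Real.one_le_sqrt.mpr hr
  have hs : √r ^ 2 = r := Real.sq_sqrt hr0.le
  have hq : 0 ≤ ((N : ℝ) - 3) / 2 := by linarith
  have b0 : u ≤ 2 := by
    have : 1 / a ≤ 1 := by rw [div_le_one ha0]; linarith
    have : 1 / √r ≤ 1 := by rw [div_le_one (by positivity)]; exact hsq
    linarith
  have b1 : (2 : ℝ) ^ (s - 1 - (N : ℝ) / 2) ≤ u ^ (s - 1 - (N : ℝ) / 2) :=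
    Real.rpow_le_rpow_of_nonpos hu b0 (by linarith)
  have hau : 1 < a * u := by
    rw [div_lt_iff₀ ha0] at hu1; linarith
  have b2 : Real.exp (-(a ^ 3 / 4)) ≤ Real.exp (-(r * ((a * u - 1) ^ 2 / (4 * u)))) := by
    apply Real.exp_le_exp.mpr
    apply neg_le_neg
    have j1 : √r * (a * u - 1) ≤ a := by
      have : a * u ≤ a * (1 / a + 1 / √r) := by gcongr
      have h2 : a * (1 / a + 1 / √r) = 1 + a / √r := by field_simp
      have h3 : √r * (a / √r) = a := by field_simp
      have h4 : √r * (a * u - 1) ≤ √r * (a / √r) := by gcongr; linarith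
      linarith
    have j2 : r * (a * u - 1) ^ 2 ≤ a ^ 2 := by
      have : (√r * (a * u - 1)) ^ 2 ≤ a ^ 2 :=
        pow_le_pow_left₀ (mul_nonneg (by positivity) (by linarith)) j1 2
      rwa [mul_pow, hs] at this
    rw [← mul_div_assoc, div_le_iff₀ (by positivity)]
    nlinarith [mul_le_mul_of_nonneg_left hau.le (sq_nonneg a)]
  have b3 : r ^ (((N : ℝ) - 3) / 2) * r ≤ (1 + r + r * u) ^ (((N : ℝ) - 3) / 2) * (1 + r) := by
    gcongr
    · nlinarith
    · linarith
  rw [← aux_rpow N s r hr0]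
  calc _ = (4 * π) ^ (-(N : ℝ) / 2) * Real.exp (-a * r) *
        (r ^ (s - 1 - (N : ℝ) / 2) * 2 ^ (s - 1 - (N : ℝ) / 2)) *
        Real.exp (-(a ^ 3 / 4)) * (r ^ (((N : ℝ) - 3) / 2) * r) := by ring
    _ ≤ _ := by gcongr

theorem F_estimate_ge_one (N : ℕ) (hN3 : 3 ≤ N) (s : ℝ) (hs0 : 0 < s) (hs1 : s < 1) :
    ∃ C₄ > (0 : ℝ), ∃ C₄' > (0 : ℝ),
      ∀ r : ℝ, 1 ≤ r →
        C₄ * Real.exp (-((N : ℝ) - 1) * r) * r ^ (s - 1) ≤ F N s r ∧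
          F N s r ≤ C₄' * Real.exp (-((N : ℝ) - 1) * r) * r ^ (s - 1) := by
  have hN' : (3 : ℝ) ≤ N := by exact_mod_cast hN3
  obtain ⟨c, hc, hlow⟩ := aux_lower N hN3 s hs1
  obtain ⟨C, hC, hup⟩ := aux_upper N hN3 s hs1
  set a : ℝ := (N : ℝ) - 1 with ha
  have ha2 : 2 ≤ a := by linarith
  have ha0 : 0 < a := by linarith
  refine ⟨c, hc, C * (√8 / a * π), by positivity, fun r hr => ?_⟩
  have hr0 : 0 < r := by linarith
  have hsr : 0 < √r := by positivity
  have hs2 : √r * √r = r := Real.mul_self_sqrt hr0.le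
  have h8 : √8 * √8 = (8 : ℝ) := Real.mul_self_sqrt (by norm_num)
  have h80 : (0 : ℝ) < √8 := by positivity
  have hhalf : r ^ (-(1 / 2) : ℝ) * √r = 1 := by
    rw [Real.sqrt_eq_rpow, ← Real.rpow_add hr0]
    norm_num
  set b : ℝ := a / (√8 * √r) with hb
  have hb0 : 0 < b := by positivity
  set K : ℝ := C * Real.exp (-a * r) * (r ^ (s - 1) * r ^ (-(1 / 2) : ℝ)) with hK
  have hK0 : 0 < K := by positivity
  set g : ℝ → ℝ := fun t => K * (1 + (b * t - √r / √8) ^ 2)⁻¹ with hg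
  have hgi : Integrable g := by
    have h1 : Integrable fun x : ℝ => (1 + (x - √r / √8) ^ 2)⁻¹ :=
      integrable_inv_one_add_sq.comp_sub_right (√r / √8)
    exact (h1.comp_mul_left' hb0.ne').const_mul K
  have hgint : ∫ t, g t = K * (b⁻¹ * π) := by
    rw [hg, integral_const_mul,
      Measure.integral_comp_mul_left (fun x : ℝ => (1 + (x - √r / √8) ^ 2)⁻¹) b,
      integral_sub_right_eq_self (fun x : ℝ => (1 + x ^ 2)⁻¹) (√r / √8),
      integral_univ_inv_one_add_sq, abs_of_pos (by positivity), smul_eq_mul]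
  have hg0 : ∀ t, 0 ≤ g t := fun t => by positivity
  have hf0 : ∀ t ∈ Ioi (0 : ℝ), 0 ≤ hN N t r * t ^ (s - 1) := by
    intro t ht
    have ht : 0 < t := ht
    unfold hN
    positivity
  have hfg : ∀ t ∈ Ioi (0 : ℝ), hN N t r * t ^ (s - 1) ≤ g t := by
    intro t ht
    have ht : 0 < t := ht
    have := hup r (t / r) hr (by positivity)
    rw [mul_div_cancel₀ t hr0.ne'] at this
    refine this.trans (le_of_eq ?_)
    rw [hg]
    have : r / 8 * (a * (t / r) - 1) ^ 2 = (b * t - √r / √8) ^ 2 := by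
      have e : b * t - √r / √8 = √r / √8 * (a * (t / r) - 1) := by
        rw [hb]
        nth_rewrite 4 [← hs2]
        field_simp
      rw [e, mul_pow, div_pow, Real.sq_sqrt hr0.le, Real.sq_sqrt (by norm_num)]
    simp only [this, hK]
  have hmeas : Measurable fun t => hN N t r * t ^ (s - 1) := by
    unfold hN
    fun_prop
  have hfi : IntegrableOn (fun t => hN N t r * t ^ (s - 1)) (Ioi 0) := by
    refine Integrable.mono' hgi.integrableOn hmeas.aestronglyMeasurable ?_
    filter_upwards [ae_restrict_mem measurableSet_Ioi] with t ht
    rw [Real.norm_of_nonneg (hf0 t ht)]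
    exact hfg t ht
  constructor
  · have hsub : Ioc (r / a) (r / a + √r) ⊆ Ioi (0 : ℝ) := fun t ht =>
      lt_trans (by positivity) ht.1
    set k : ℝ := c * Real.exp (-a * r) * (r ^ (s - 1) * r ^ (-(1 / 2) : ℝ)) with hk
    calc c * Real.exp (-a * r) * r ^ (s - 1) = √r * k := by
          rw [hk]
          linear_combination (-(c * Real.exp (-a * r) * r ^ (s - 1))) * hhalf
      _ = ∫ t in Ioc (r / a) (r / a + √r), k := by
          simp [hsr.le]
      _ ≤ ∫ t in Ioc (r / a) (r / a + √r), hN N t r * t ^ (s - 1) := by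
          refine setIntegral_mono_on (by simp) (hfi.mono_set hsub) measurableSet_Ioc ?_
          intro t ht
          have := hlow r (t / r) hr ?_ ?_
          · rwa [mul_div_cancel₀ t hr0.ne'] at this
          · rw [lt_div_iff₀ hr0]
            have := ht.1
            rw [one_div, inv_mul_eq_div]; exact this
          · rw [div_le_iff₀ hr0]
            refine ht.2.trans (le_of_eq ?_)
            have : 1 / √r * r = √r := by
              nth_rewrite 2 [← hs2]
              field_simp
            rw [add_mul, this]
            ring
      _ ≤ F N s r := by
          unfold F
          refine setIntegral_mono_set hfi ?_ hsub.eventuallyLE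
          filter_upwards [ae_restrict_mem measurableSet_Ioi] with t ht
          exact hf0 t ht
  · calc F N s r ≤ ∫ t in Ioi (0 : ℝ), g t :=
          setIntegral_mono_on hfi hgi.integrableOn measurableSet_Ioi hfg
      _ ≤ ∫ t, g t := setIntegral_le_integral hgi (Eventually.of_forall hg0)
      _ = _ := by
          rw [hgint, hK, hb, inv_div]
          linear_combination (C * Real.exp (-a * r) * r ^ (s - 1) * (√8 / a * π)) * hhalf
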